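/- Let U ⊆ ℝ² be a nonempty open set and let f : U → ℝ² be distance preserving, i.e. ‖f(x) − f(y)‖ = ‖x − y‖ for all x, y ∈ U. Then there exists an affine isometry g : ℝ² → ℝ² (a composition of a linear orthogonal map with a translation) such that g(x) = f(x) for every x ∈ U. -/

import Mathlib

/-- Let `U ⊆ ℝ²` be a nonempty open set and `f : U → ℝ²` distance
preserving (`‖f x − f y‖ = ‖x − y‖` for `x, y ∈ U`). Then there is an affine isometry
`g : ℝ² → ℝ²` — a linear orthogonal map `A` followed by a translation by `b` — with
`g x = f x` for every `x ∈ U`. -/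
theorem local_plane_isometry_extends_to_affine_isometry
    (U : Set (EuclideanSpace ℝ (Fin 2))) (hU : IsOpen U) (hne : U.Nonempty)
    (f : EuclideanSpace ℝ (Fin 2) → EuclideanSpace ℝ (Fin 2))
    (hf : ∀ x ∈ U, ∀ y ∈ U, dist (f x) (f y) = dist x y) :
    ∃ (A : EuclideanSpace ℝ (Fin 2) ≃ₗᵢ[ℝ] EuclideanSpace ℝ (Fin 2))
      (b : EuclideanSpace ℝ (Fin 2)),
      ∀ x ∈ U, f x = A x + b := by
  obtain ⟨x0, hx0⟩ := hne
  obtain ⟨r, hr, hball⟩ := Metric.isOpen_iff.1 hU x0 hx0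
  have key : ∀ x ∈ U, ∀ y ∈ U,
      inner ℝ (f x - f x0) (f y - f x0) = inner ℝ (x - x0) (y - x0) := by
    intro x hx y hy
    have h1 := hf x hx x0 hx0
    have h2 := hf y hy x0 hx0
    have h3 := hf x hx y hy
    rw [dist_eq_norm, dist_eq_norm] at h1 h2 h3
    rw [real_inner_eq_norm_mul_self_add_norm_mul_self_sub_norm_sub_mul_self_div_two,
      real_inner_eq_norm_mul_self_add_norm_mul_self_sub_norm_sub_mul_self_div_two,
      sub_sub_sub_cancel_right, sub_sub_sub_cancel_right, h1, h2, h3]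
  let v := EuclideanSpace.basisFun (Fin 2) ℝ
  have hmem : ∀ i, x0 + (r / 2) • v i ∈ U := by
    intro i
    apply hball
    rw [Metric.mem_ball, dist_eq_norm, add_sub_cancel_left, norm_smul, v.norm_eq_one,
      Real.norm_eq_abs, abs_of_pos (by positivity)]
    linarith
  let w : Fin 2 → EuclideanSpace ℝ (Fin 2) :=
    fun i => (r / 2)⁻¹ • (f (x0 + (r / 2) • v i) - f x0)
  have hw : ∀ i, ∀ x ∈ U, inner ℝ (w i) (f x - f x0) = inner ℝ (v i) (x - x0) := by
    intro i x hx
    simp only [w]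
    rw [real_inner_smul_left, key _ (hmem i) x hx, add_sub_cancel_left, real_inner_smul_left]
    field_simp
  have hon : Orthonormal ℝ w := by
    rw [orthonormal_iff_ite]
    intro i j
    have h : inner ℝ (w i) (w j) = inner ℝ (v i) (v j) := by
      conv_lhs => rw [show w j = (r / 2)⁻¹ • (f (x0 + (r / 2) • v j) - f x0) from rfl]
      rw [real_inner_smul_right, hw i _ (hmem j), add_sub_cancel_left, real_inner_smul_right]
      field_simp
    rw [h]
    exact orthonormal_iff_ite.1 v.orthonormal i j
  let B := basisOfOrthonormalOfCardEqFinrank hon (by simp)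
  have hB : ⇑B = w := coe_basisOfOrthonormalOfCardEqFinrank hon (by simp)
  let W := B.toOrthonormalBasis (by rw [hB]; exact hon)
  have hW : ∀ i, W i = w i := by
    intro i
    simp [W, hB]
  refine ⟨v.repr.trans W.repr.symm, f x0 - (v.repr.trans W.repr.symm) x0, fun x hx => ?_⟩
  have h : f x - f x0 = (v.repr.trans W.repr.symm) (x - x0) := by
    apply W.repr.injective
    ext i
    rw [LinearIsometryEquiv.trans_apply, LinearIsometryEquiv.apply_symm_apply,
      W.repr_apply_apply, v.repr_apply_apply, hW, hw i x hx]
  rw [map_sub] at h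
  rw [sub_eq_iff_eq_add.1 h]
  abel
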